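/- Lefschetz numbers of a cyclic permutative map on a wedge sum: in the cyclic algebraic model, (a) for every m ≥ 1 one has L(f^{sm}) = (∑_{j=1}^s L(f_jj^{sm})) − (s − 1), and (b) L(f^m) = 1 whenever m is not divisible by s. -/

import Mathlib

/-!
The trace of an endomorphism of a finite direct sum is the sum of the traces of its diagonal blocks.
Summing over the `s` blocks counts the degree-zero contribution `1` of the Lefschetz number `s`
times instead of once, whence the correction `s - 1`. If `σ ^ m` has no fixed point, then `F_k ^ m`
moves every summand to a different one, so all its diagonal blocks vanish and only the degree-zero
contribution is left.
-/

section Blocks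

variable {R ι : Type*} [Semiring R] [DecidableEq ι]
  {W : ι → Type*} [∀ i, AddCommMonoid (W i)] [∀ i, Module R (W i)]

/-- The `i`-th diagonal block `π_i ∘ G ∘ ι_i` of an endomorphism `G` of a product of modules. -/
def diagBlock (G : Module.End R (Π i, W i)) (i : ι) : Module.End R (W i) :=
  LinearMap.proj i ∘ₗ G ∘ₗ LinearMap.single R W i

/-- `G` maps the `i`-th summand into the `σ i`-th one for every `i`, as the map induced on homology
by a permutative map does. -/
def MapsBlocks (σ : ι → ι) (G : Module.End R (Π i, W i)) : Prop :=
  ∀ i, Set.MapsTo G (LinearMap.range (LinearMap.single R W i))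
    (LinearMap.range (LinearMap.single R W (σ i)))

theorem mapsBlocks_of_apply_single {σ : ι → ι} {G : Module.End R (Π i, W i)}
    (A : ∀ i, W i → W (σ i)) (hA : ∀ i v, G (Pi.single i v) = Pi.single (σ i) (A i v)) :
    MapsBlocks σ G := by
  rintro i _ ⟨v, rfl⟩
  exact ⟨A i v, (hA i v).symm⟩

theorem MapsBlocks.pow {σ : ι → ι} {G : Module.End R (Π i, W i)} (hG : MapsBlocks σ G) (m : ℕ) :
    MapsBlocks σ^[m] (G ^ m) := by
  induction m with
  | zero => exact fun i => Set.mapsTo_id _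
  | succ m ih =>
    intro i
    rw [pow_succ', Function.iterate_succ_apply']
    exact (hG _).comp (ih i)

theorem MapsBlocks.diagBlock_eq_zero {σ : ι → ι} {G : Module.End R (Π i, W i)}
    (hG : MapsBlocks σ G) {i : ι} (hi : σ i ≠ i) : diagBlock G i = 0 := by
  ext v
  obtain ⟨w, hw⟩ := hG i ⟨v, rfl⟩
  calc diagBlock G i v = LinearMap.single R W (σ i) w i := congrFun hw.symm i
    _ = 0 := Pi.single_eq_of_ne hi.symm w

theorem sum_comp_single_comp_proj [Fintype ι] {M : Type*} [AddCommMonoid M] [Module R M]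
    (G : (Π i, W i) →ₗ[R] M) :
    ∑ i, (G ∘ₗ LinearMap.single R W i) ∘ₗ LinearMap.proj i = G := by
  refine LinearMap.ext fun x => ?_
  simp only [LinearMap.sum_apply, LinearMap.comp_apply, LinearMap.proj_apply, ← map_sum,
    LinearMap.single_apply, LinearMap.sum_single_apply]

end Blocks

theorem trace_eq_sum_trace_diagBlock {R ι : Type*} [CommRing R] [Fintype ι] [DecidableEq ι]
    {W : ι → Type*} [∀ i, AddCommGroup (W i)] [∀ i, Module R (W i)]
    [∀ i, Module.Free R (W i)] [∀ i, Module.Finite R (W i)] (G : Module.End R (Π i, W i)) :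
    LinearMap.trace R (Π i, W i) G = ∑ i, LinearMap.trace R (W i) (diagBlock G i) := by
  calc LinearMap.trace R (Π i, W i) G
      = ∑ i, LinearMap.trace R _ ((G ∘ₗ LinearMap.single R W i) ∘ₗ LinearMap.proj i) := by
        rw [← map_sum, sum_comp_single_comp_proj]
    _ = ∑ i, LinearMap.trace R (W i) (diagBlock G i) :=
        Finset.sum_congr rfl fun _ _ => LinearMap.trace_comp_comm' _ _

section Lefschetz

variable {R : Type*} [CommRing R] {N : ℕ}

/-- The Lefschetz number of the endomorphisms induced on homology by a self-map of a connected
space. The index `k : Fin N` stands for degree `k + 1`, and the leading `1` is the trace in degree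
zero. -/
noncomputable def lefschetzNumber {M : Fin N → Type*} [∀ k, AddCommGroup (M k)]
    [∀ k, Module R (M k)] (f : ∀ k, Module.End R (M k)) : R :=
  1 + ∑ k : Fin N, (-1) ^ ((k : ℕ) + 1) * LinearMap.trace R (M k) (f k)

variable {ι : Type*} [DecidableEq ι] {V : ι → Fin N → Type*}
  [∀ i k, AddCommGroup (V i k)] [∀ i k, Module R (V i k)]
  [∀ i k, Module.Free R (V i k)] [∀ i k, Module.Finite R (V i k)]

theorem lefschetzNumber_eq_sum_diagBlock [Fintype ι] (G : ∀ k, Module.End R (Π i, V i k)) :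
    lefschetzNumber G =
      ∑ i, lefschetzNumber (fun k => diagBlock (G k) i) - ((Fintype.card ι : R) - 1) := by
  simp only [lefschetzNumber, trace_eq_sum_trace_diagBlock, Finset.mul_sum,
    Finset.sum_add_distrib, Finset.sum_const, Finset.card_univ, nsmul_one]
  rw [Finset.sum_comm]
  ring

theorem lefschetzNumber_eq_one_of_mapsBlocks [Finite ι] {σ : ι → ι} (hσ : ∀ i, σ i ≠ i)
    {G : ∀ k, Module.End R (Π i, V i k)} (hG : ∀ k, MapsBlocks σ (G k)) :
    lefschetzNumber G = 1 := by
  have := Fintype.ofFinite ι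
  have trace_eq_zero (k : Fin N) : LinearMap.trace R _ (G k) = 0 := by
    rw [trace_eq_sum_trace_diagBlock]
    exact Finset.sum_eq_zero fun i _ => by rw [(hG k).diagBlock_eq_zero (hσ i), map_zero]
  simp only [lefschetzNumber, trace_eq_zero, mul_zero, Finset.sum_const_zero, add_zero]

theorem stmt4_general [Fintype ι] {σ : ι → ι} {F : ∀ k, Module.End R (Π i, V i k)}
    (hF : ∀ k, MapsBlocks σ (F k)) (m : ℕ) :
    lefschetzNumber (fun k => F k ^ m) =
        ∑ i, lefschetzNumber (fun k => diagBlock (F k ^ m) i) - ((Fintype.card ι : R) - 1) ∧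
      ((∀ i, σ^[m] i ≠ i) → lefschetzNumber (fun k => F k ^ m) = 1) :=
  ⟨lefschetzNumber_eq_sum_diagBlock _,
    fun hσ => lefschetzNumber_eq_one_of_mapsBlocks hσ fun k => (hF k).pow m⟩

end Lefschetz

/-- **Lefschetz numbers of a cyclic permutative squared-by-blocks map on a wedge sum.**
In the cyclic algebraic model: `σ` is a single `s`-cycle on `{1,…,s}` (every point has exact
period `s`), the spaces `V i k` (the `k`-th rational homology of `X_i`) have dimensions
independent of `i`, `A i k : V i k → V (σ i) k` is induced by the coordinate map
`f_{iσ(i)} : X_i → X_{σ(i)}`, and `F k` is the block-permutation endomorphism of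
`⊕_i V i k` sending the summand `V i k` into `V (σ i) k` by `A i k` (so `F k = f_{*k}`).
With `L m = L(f^m) = 1 + ∑_{k=1}^N (-1)^k tr(F_k^m)` and
`Lc i m = L(f_ii^m) = 1 + ∑_{k=1}^N (-1)^k tr(π_{i,k} ∘ F_k^m ∘ ι_{i,k})`:
(a) `L(f^{sm}) = (∑_{j=1}^s L(f_jj^{sm})) − (s − 1)` for every `m ≥ 1`, and
(b) `L(f^m) = 1` whenever `s ∤ m`. -/
theorem stmt4 (s N : ℕ) (hs : 1 ≤ s) (hN : 1 ≤ N)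
    (σ : Equiv.Perm (Fin s))
    (hσ : ∀ (i : Fin s) (m : ℕ), (σ ^ m) i = i ↔ s ∣ m)
    (V : Fin s → Fin N → Type*)
    [∀ i k, AddCommGroup (V i k)] [∀ i k, Module ℚ (V i k)]
    [∀ i k, FiniteDimensional ℚ (V i k)]
    (hdim : ∀ (i i' : Fin s) (k : Fin N),
      Module.finrank ℚ (V i k) = Module.finrank ℚ (V i' k))
    (A : ∀ i k, V i k →ₗ[ℚ] V (σ i) k)
    (F : ∀ k, (Π i, V i k) →ₗ[ℚ] (Π i, V i k))
    (hF : ∀ k (i : Fin s) (v : V i k), F k (Pi.single i v) = Pi.single (σ i) (A i k v))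
    (L : ℕ → ℚ)
    (hL : ∀ m, L m =
      1 + ∑ k : Fin N, (-1 : ℚ) ^ ((k : ℕ) + 1) *
        LinearMap.trace ℚ (Π i, V i k) ((F k) ^ m))
    (Lc : Fin s → ℕ → ℚ)
    (hLc : ∀ i m, Lc i m =
      1 + ∑ k : Fin N, (-1 : ℚ) ^ ((k : ℕ) + 1) *
        LinearMap.trace ℚ (V i k)
          ((LinearMap.proj i) ∘ₗ ((F k) ^ m) ∘ₗ (LinearMap.single ℚ (fun j => V j k) i))) :
    (∀ m, 1 ≤ m → L (s * m) = (∑ j : Fin s, Lc j (s * m)) - ((s : ℚ) - 1)) ∧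
    (∀ m, ¬ s ∣ m → L m = 1) := by
  have general := stmt4_general fun k => mapsBlocks_of_apply_single (fun i => A i k) (hF k)
  obtain rfl : L = fun m => lefschetzNumber fun k => F k ^ m := funext hL
  obtain rfl : Lc = fun i m => lefschetzNumber (M := V i) fun k => diagBlock (F k ^ m) i :=
    funext₂ hLc
  refine ⟨fun m _ => by simpa only [Fintype.card_fin] using (general (s * m)).1,
    fun m hm => (general m).2 fun i hi => hm ((hσ i m).1 ?_)⟩
  rwa [← Equiv.Perm.iterate_eq_pow]
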